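/- arXiv:1907.02308 — 3 statements merged into one kernel-verified Lean document; each statement's English description precedes it below -/
import Mathlib

section
/- Let w be a primitive word of length n over a linearly ordered alphabet and L = abwt(w). Then for every row index 0 ≤ i < n, LF(i) = C − rank_{L[i]}(L, i−1) − 1, where C is the total number of positions t with 0 ≤ t < n such that L[t] ≤ L[i] in the standard order. -/
namespace Paper

variable {α : Type*}

/-- Extended alternating lexicographic strict order; the flag `b` is `true`
when the current position index is even. -/
def altLtAux [LinearOrder α] : Bool → List α → List α → Prop
  | _, [], [] => False
  | b, [], _ :: _ => b = true
  | b, _ :: _, [] => b = false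
  | b, c :: x, d :: y => (if b then c < d else d < c) ∨ (c = d ∧ altLtAux (!b) x y)

/-- The alternating lexicographic strict order (positions indexed from 0). -/
def AltLt [LinearOrder α] (x y : List α) : Prop := altLtAux true x y

/-- The reflexive alternating lexicographic order. -/
def AltLe [LinearOrder α] (x y : List α) : Prop := x = y ∨ AltLt x y

/-- A word is primitive if its cyclic rotations are pairwise distinct. -/
def Primitive (w : List α) : Prop :=
  ∀ i j, i < w.length → j < w.length → w.rotate i = w.rotate j → i = j

/-!
Removing a common last letter from two words of equal length does not affect their comparison, and
prepending a common letter shifts every position by one, which reverses the alternating order.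
Hence, moving last letters to the front, two rows of the matrix compare by their last letters, and
rows with equal last letters change places. So `LF` lists the rows by last letter, ties in
decreasing order of index: the rows `t` with `L t ≤ L i` are those sent below `LF i`, those with
`L t = L i` and `t < i`, and `i` itself.
-/

theorem rotate_length_sub_one_append_singleton (l : List α) (c : α) :
    (l ++ [c]).rotate ((l ++ [c]).length - 1) = c :: l := by
  simp [List.rotate_append_length_eq]

section AlternatingOrder

variable [LinearOrder α] {x y : List α} {a b : α}

theorem altLtAux_not_iff_swap (p : Bool) (x y : List α) : altLtAux (!p) x y ↔ altLtAux p y x := by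
  induction x generalizing p y with
  | nil => cases y <;> simp [altLtAux]
  | cons c x ih =>
    cases y with
    | nil => simp [altLtAux]
    | cons d y => cases p <;> simp [altLtAux, ← ih, eq_comm]

theorem altLtAux_asymm (p : Bool) (x y : List α) (h : altLtAux p x y) : ¬ altLtAux p y x := by
  induction x generalizing p y with
  | nil => cases y <;> simp_all [altLtAux]
  | cons c x ih =>
    cases y with
    | nil => simp_all [altLtAux]
    | cons d y =>
      rcases h with h | ⟨rfl, h⟩
      · cases p <;> simp_all [altLtAux, h.not_gt, h.ne, h.ne']
      · simpa [altLtAux] using ih _ _ h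

theorem altLtAux_append_right_iff (p : Bool) (h : x.length = y.length) (z : List α) :
    altLtAux p (x ++ z) (y ++ z) ↔ altLtAux p x y := by
  induction x generalizing p y with
  | nil =>
    obtain rfl : y = [] := List.length_eq_zero_iff.mp h.symm
    simpa [altLtAux] using fun hz => altLtAux_asymm p z z hz hz
  | cons c x ih =>
    cases y with
    | nil => simp at h
    | cons d y => simp [altLtAux, ih (!p) (Nat.succ.inj h)]

instance : Std.Asymm (AltLt (α := α)) := ⟨altLtAux_asymm true⟩

theorem altLt_append_right_iff (h : x.length = y.length) (z : List α) :
    AltLt (x ++ z) (y ++ z) ↔ AltLt x y :=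
  altLtAux_append_right_iff true h z

theorem altLt_cons_cons_iff : AltLt (a :: x) (b :: y) ↔ a < b ∨ a = b ∧ AltLt y x := by
  simp [AltLt, altLtAux, ← altLtAux_not_iff_swap true]

theorem altLt_rotate_length_sub_one_iff (hlen : x.length = y.length)
    (hx : x.getLast? = some a) (hy : y.getLast? = some b) :
    AltLt (x.rotate (x.length - 1)) (y.rotate (y.length - 1)) ↔ a < b ∨ a = b ∧ AltLt y x := by
  obtain ⟨u, rfl⟩ := List.getLast?_eq_some_iff.mp hx
  obtain ⟨v, rfl⟩ := List.getLast?_eq_some_iff.mp hy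
  have huv : v.length = u.length := by simpa using hlen.symm
  rw [rotate_length_sub_one_append_singleton, rotate_length_sub_one_append_singleton,
    altLt_cons_cons_iff]
  refine or_congr_right (and_congr_right ?_)
  rintro rfl
  exact (altLt_append_right_iff huv [a]).symm

theorem altLt_iff_lt_of_forall_lt {ι : Type*} [LinearOrder ι] {rows : ι → List α}
    (hsorted : ∀ i j, i < j → AltLt (rows i) (rows j)) {i j : ι} :
    AltLt (rows i) (rows j) ↔ i < j :=
  (RelEmbedding.ofMonotone rows hsorted).map_rel_iff

theorem LF_lt_LF_iff {ι : Type*} [LinearOrder ι] {rows : ι → List α} {L : ι → α} {LF : ι → ι}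
    (hlen : ∀ i j, (rows i).length = (rows j).length)
    (hsorted : ∀ i j, i < j → AltLt (rows i) (rows j))
    (hL : ∀ i, (rows i).getLast? = some (L i))
    (hLF : ∀ i, rows (LF i) = (rows i).rotate ((rows i).length - 1)) (s t : ι) :
    LF s < LF t ↔ L s < L t ∨ L s = L t ∧ t < s := by
  rw [← altLt_iff_lt_of_forall_lt hsorted, hLF, hLF,
    altLt_rotate_length_sub_one_iff (hlen s t) (hL s) (hL t), altLt_iff_lt_of_forall_lt hsorted]

end AlternatingOrder

section Counting

open Finset

variable {ι κ : Type*} [LinearOrder ι] [LinearOrder α] [Preorder κ] {f : ι → κ} {g : ι → α}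

theorem injective_of_lt_iff_lt_or_eq_and_gt
    (hf : ∀ s t, f s < f t ↔ g s < g t ∨ g s = g t ∧ t < s) : Function.Injective f := by
  intro s t hst
  have hs := hf s t
  have ht := hf t s
  simp only [hst, lt_irrefl, false_iff, not_or, not_and] at hs ht
  have hg : g s = g t := le_antisymm (not_lt.mp ht.1) (not_lt.mp hs.1)
  exact le_antisymm (not_lt.mp (hs.2 hg)) (not_lt.mp (ht.2 hg.symm))

theorem card_filter_le_of_lt_iff_lt_or_eq_and_gt [Fintype ι] [DecidableLT κ]
    (hf : ∀ s t, f s < f t ↔ g s < g t ∨ g s = g t ∧ t < s) (i : ι) :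
    #{t | g t ≤ g i} = #{t | f t < f i} + #{t | t < i ∧ g t = g i} + 1 := by
  have hsplit : ({t | g t ≤ g i} : Finset ι) =
      ({t | f t < f i} : Finset ι) ∪ insert i ({t | t < i ∧ g t = g i} : Finset ι) := by
    ext t
    simp only [mem_filter_univ, mem_union, mem_insert, hf]
    grind
  have hdisj : Disjoint ({t | f t < f i} : Finset ι)
      (insert i ({t | t < i ∧ g t = g i} : Finset ι)) := by
    simp only [disjoint_left, mem_filter_univ, mem_insert, hf]
    grind
  rw [hsplit, card_union_of_disjoint hdisj, card_insert_of_notMem (by simp), add_assoc]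

theorem card_filter_lt_apply {n : ℕ} {σ : Fin n → Fin n} (hσ : Function.Injective σ) (i : Fin n) :
    #{t | σ t < σ i} = (σ i : ℕ) := by
  rw [← Fin.card_Iio (σ i)]
  exact card_bijective σ (Finite.injective_iff_bijective.mp hσ) (by simp)

end Counting

theorem Primitive.length_eq_of_forall_exists_eq_rotate {w : List α} (hprim : Primitive w)
    {rows : Fin w.length → List α} (hrows : ∀ j : Fin w.length, ∃ i, rows i = w.rotate j)
    (i : Fin w.length) : (rows i).length = w.length := by
  choose g hg using hrows
  have hinj : Function.Injective g := fun a b hab =>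
    Fin.ext (hprim a b a.isLt b.isLt (by rw [← hg, ← hg, hab]))
  obtain ⟨j, rfl⟩ := Finite.surjective_of_injective hinj i
  rw [hg, List.length_rotate]

theorem abwt_LF_formula_general [LinearOrder α] (n : ℕ)
    (rows : Fin n → List α) (L : Fin n → α) (LF : Fin n → Fin n)
    (hlen : ∀ i j, (rows i).length = (rows j).length)
    (hsorted : ∀ i j : Fin n, i < j → AltLt (rows i) (rows j))
    (hL : ∀ i, (rows i).getLast? = some (L i))
    (hLF : ∀ i, rows (LF i) = (rows i).rotate ((rows i).length - 1)) :
    ∀ i : Fin n, ((LF i : ℕ) : ℤ) =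
      ((Finset.univ.filter fun t : Fin n => L t ≤ L i).card : ℤ)
        - ((Finset.univ.filter fun t : Fin n => t < i ∧ L t = L i).card : ℤ) - 1 := by
  intro i
  have hlt := LF_lt_LF_iff hlen hsorted hL hLF
  have hcard := card_filter_le_of_lt_iff_lt_or_eq_and_gt hlt i
  rw [card_filter_lt_apply (injective_of_lt_iff_lt_or_eq_and_gt hlt)] at hcard
  lia

/-- the LF-mapping of the ABWT satisfies
`LF i = C − rank_{L i}(L, i−1) − 1`, where `C` is the number of positions `t`
with `L t ≤ L i` in the standard order, and `rank_{L i}(L, i−1)` is the number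
of occurrences of `L i` among `L 0, …, L (i-1)`. -/
theorem abwt_LF_formula [LinearOrder α] (n : ℕ) (w : List α)
    (hw : w.length = n) (hprim : Primitive w)
    (rows : Fin n → List α) (L : Fin n → α) (LF : Fin n → Fin n)
    (hrows : ∀ j : Fin n, ∃ i : Fin n, rows i = w.rotate j.val)
    (hsorted : ∀ i j : Fin n, i < j → AltLt (rows i) (rows j))
    (hL : ∀ i, (rows i).getLast? = some (L i))
    (hLF : ∀ i, rows (LF i) = (rows i).rotate ((rows i).length - 1)) :
    ∀ i : Fin n, ((LF i : ℕ) : ℤ) =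
      ((Finset.univ.filter fun t : Fin n => L t ≤ L i).card : ℤ)
        - ((Finset.univ.filter fun t : Fin n => t < i ∧ L t = L i).card : ℤ) - 1 := by
  subst hw
  have hlen := hprim.length_eq_of_forall_exists_eq_rotate hrows
  exact abwt_LF_formula_general _ rows L LF (by simp [hlen]) hsorted hL hLF

end Paper
end

section
/- Let Σ be a finite alphabet with |Σ| ≥ 2 and let K = (Id, π) where π is a linear order on Σ. Then BWT_K is rank-invertible if and only if π = Id (the standard order) or π = Rev (the reverse of the standard order). -/
namespace Paper

variable {α : Type*}

/-- Generalized lexicographic strict order on equal-length words determined by a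
sequence `σ` of strict orders, one per position (`σ d` is used at position `d`). -/
def KLt (σ : ℕ → α → α → Prop) : ℕ → List α → List α → Prop
  | _, [], _ => False
  | _, _ :: _, [] => False
  | d, a :: x, b :: y => σ d a b ∨ (a = b ∧ KLt σ (d + 1) x y)

/-- Rank-invertibility of the generalized BWT determined by the sequence of
per-position strict orders `σ`: there is a function `f` computing `LF i` from
the Parikh vector of the last column `L`, the symbol `L i`, and the number of
occurrences of `L i` in `L[0..i]`. -/
def RankInvertible [LinearOrder α] (σ : ℕ → α → α → Prop) : Prop :=
  ∃ f : (α → ℕ) → α → ℕ → ℕ,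
    ∀ (n : ℕ) (w : List α), w.length = n → Primitive w →
      ∀ (rows : Fin n → List α) (L : Fin n → α) (LF : Fin n → Fin n),
        (∀ j : Fin n, ∃ i : Fin n, rows i = w.rotate j.val) →
        (∀ i j : Fin n, i < j → KLt σ 0 (rows i) (rows j)) →
        (∀ i, (rows i).getLast? = some (L i)) →
        (∀ i, rows (LF i) = (rows i).rotate ((rows i).length - 1)) →
        ∀ i : Fin n, (LF i : ℕ) =
          f (fun c => (List.ofFn L).count c) (L i)
            (((List.ofFn L).take (i.val + 1)).count (L i))

/-!
Let `u·c` and `v·c` be rows ending in the same letter `c`. The LF permutation sends them to `c·u`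
and `c·v`, so it compares `u` and `v` with every order read one position later. If the sequence of
orders is constant, LF preserves the relative position of the two rows; if each order is the reverse
of its predecessor, LF exchanges it. In both cases LF of a row is the number of letters smaller than
`c` plus the number of `c`s before, respectively after, the one ending that row.

Conversely, for `a < b < c` the words `aabc`, `aacb`, `abac` have the same Parikh vector `P`, and
the first row ending in `a` is sent to the top row exactly when `π a b`, `π a c`, `π b c`
respectively. As `f P a 1` has a single value, `π` agrees on all three pairs, which makes it
monotone or antitone.
-/

open scoped Finset

namespace KLt

variable {σ : ℕ → α → α → Prop}

theorem irrefl [∀ d, Std.Irrefl (σ d)] : ∀ (d : ℕ) (u : List α), ¬ KLt σ d u u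
  | _, [], h => h
  | d, a :: _, .inl h => Std.Irrefl.irrefl (r := σ d) a h
  | d, _ :: u, .inr h => irrefl (d + 1) u h.2

theorem asymm [∀ d, Std.Asymm (σ d)] :
    ∀ {d : ℕ} {u v : List α}, KLt σ d u v → ¬ KLt σ d v u
  | d, a :: _, b :: _, .inl hab, .inl hba => Std.Asymm.asymm (r := σ d) a b hab hba
  | d, a :: _, _ :: _, .inl hab, .inr ⟨rfl, _⟩ => Std.Irrefl.irrefl (r := σ d) a hab
  | d, a :: _, _ :: _, .inr ⟨rfl, _⟩, .inl hba => Std.Irrefl.irrefl (r := σ d) a hba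
  | _, _ :: _, _ :: _, .inr ⟨_, huv⟩, .inr ⟨_, hvu⟩ => asymm huv hvu

theorem append_right_iff [∀ d, Std.Irrefl (σ d)] (s : List α) :
    ∀ {d : ℕ} {u v : List α}, u.length = v.length →
      (KLt σ d (u ++ s) (v ++ s) ↔ KLt σ d u v)
  | d, [], [], _ => iff_of_false (irrefl d s) not_false
  | _, _ :: _, _ :: _, h =>
    or_congr_right (and_congr_right fun _ => append_right_iff s (Nat.succ.inj h))

theorem succ_iff (hσ : ∀ d a b, σ (d + 1) a b ↔ σ d a b) :
    ∀ {d : ℕ} {u v : List α}, KLt σ (d + 1) u v ↔ KLt σ d u v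
  | _, [], _ => Iff.rfl
  | _, _ :: _, [] => Iff.rfl
  | d, a :: _, b :: _ => or_congr (hσ d a b) (and_congr_right fun _ => succ_iff hσ)

theorem succ_iff_swap (hσ : ∀ d a b, σ (d + 1) a b ↔ σ d b a) :
    ∀ {d : ℕ} {u v : List α}, KLt σ (d + 1) u v ↔ KLt σ d v u
  | _, [], [] => Iff.rfl
  | _, [], _ :: _ => Iff.rfl
  | _, _ :: _, [] => Iff.rfl
  | d, a :: _, b :: _ => or_congr (hσ d a b) (and_congr eq_comm (succ_iff_swap hσ))

end KLt

theorem primitive_of_count_eq_one [DecidableEq α] {w : List α} {c : α} (hc : w.count c = 1) :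
    Primitive w := by
  have unique {k l : ℕ} (hk : k < w.length) (hl : l < w.length) (hkc : w[k] = c)
      (hlc : w[l] = c) : k = l := by
    have not_dup : ¬ w.Duplicate c := by simp [List.duplicate_iff_two_le_count, hc]
    rw [List.duplicate_iff_exists_distinct_get] at not_dup
    by_contra hkl
    rcases Nat.lt_or_gt_of_ne hkl with h | h
    · exact not_dup ⟨⟨k, hk⟩, ⟨l, hl⟩, h, hkc.symm, hlc.symm⟩
    · exact not_dup ⟨⟨l, hl⟩, ⟨k, hk⟩, h, hlc.symm, hkc.symm⟩
  intro i j hi hj hij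
  have pos : 0 < w.length := by omega
  have mem : c ∈ w.rotate i := List.mem_rotate.mpr (List.count_pos_iff.mp (by omega))
  obtain ⟨m, hm, hmi⟩ := List.getElem_of_mem mem
  have hmj : (w.rotate j)[m]'(by simpa using hm) = c := by simpa only [← hij] using hmi
  rw [List.getElem_rotate] at hmi hmj
  have hmod : m + i ≡ m + j [MOD w.length] :=
    unique (Nat.mod_lt _ pos) (Nat.mod_lt _ pos) hmi hmj
  exact hmod.add_left_cancel'.eq_of_lt_of_lt hi hj

/-- `rows`, `L` and `LF` are the sorted rotation matrix, the last column and the LF permutation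
of the primitive word `w`; this bundles the hypotheses on a single word in `RankInvertible`. -/
structure IsBWTMatrix (σ : ℕ → α → α → Prop) (w : List α) {n : ℕ}
    (rows : Fin n → List α) (L : Fin n → α) (LF : Fin n → Fin n) : Prop where
  length_eq : w.length = n
  primitive : Primitive w
  exists_row_eq : ∀ j : Fin n, ∃ i : Fin n, rows i = w.rotate j
  sorted : ∀ i j : Fin n, i < j → KLt σ 0 (rows i) (rows j)
  getLast?_row : ∀ i, (rows i).getLast? = some (L i)
  row_LF : ∀ i, rows (LF i) = (rows i).rotate ((rows i).length - 1)

/-- `f` is a witness of `RankInvertible σ`: it computes the LF permutation of every primitive word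
from Parikh vector, symbol and (one-based) rank. -/
def IsRankInverse [DecidableEq α] (σ : ℕ → α → α → Prop) (f : (α → ℕ) → α → ℕ → ℕ) : Prop :=
  ∀ ⦃w : List α⦄ ⦃n : ℕ⦄ ⦃rows : Fin n → List α⦄ ⦃L : Fin n → α⦄ ⦃LF : Fin n → Fin n⦄,
    IsBWTMatrix σ w rows L LF → ∀ i : Fin n,
      (LF i : ℕ) = f (fun c => (List.ofFn L).count c) (L i)
        (((List.ofFn L).take (i + 1)).count (L i))

theorem rankInvertible_iff_exists_isRankInverse [LinearOrder α] {σ : ℕ → α → α → Prop} :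
    RankInvertible σ ↔ ∃ f, IsRankInverse σ f :=
  exists_congr fun _ =>
    ⟨fun h w n _ _ _ M => h n w M.length_eq M.primitive _ _ _ M.exists_row_eq M.sorted
      M.getLast?_row M.row_LF,
    fun h _ _ hn hw _ _ _ h₁ h₂ h₃ h₄ => h ⟨hn, hw, h₁, h₂, h₃, h₄⟩⟩

section Counting

variable {n : ℕ}

theorem count_take_ofFn [DecidableEq α] (L : Fin n → α) (c : α) (m : ℕ) :
    ((List.ofFn L).take m).count c = #{j : Fin n | L j = c ∧ j.val < m} := by
  induction n generalizing m with
  | zero => simp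
  | succ n ih =>
    cases m with
    | zero => simp
    | succ m =>
      rw [List.ofFn_succ, List.take_succ_cons, List.count_cons, ih, Fin.card_filter_univ_succ']
      simp [add_comm]

theorem count_ofFn [DecidableEq α] (L : Fin n → α) (c : α) :
    (List.ofFn L).count c = #{j | L j = c} := by
  rw [← List.take_of_length_le (i := n) (l := List.ofFn L) (by simp), count_take_ofFn]
  simp

theorem rank_eq_card_filter_lt_add_one [DecidableEq α] (L : Fin n → α) (i : Fin n) :
    ((List.ofFn L).take (i + 1)).count (L i) = #{j | L j = L i ∧ j < i} + 1 := by
  have h : Finset.univ.filter (fun j : Fin n => L j = L i ∧ j.val < i + 1) =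
      insert i (Finset.univ.filter fun j => L j = L i ∧ j < i) := by
    ext j
    grind
  rw [count_take_ofFn, h, Finset.card_insert_of_notMem (by simp)]

theorem count_ofFn_eq_rank_add [DecidableEq α] (L : Fin n → α) (i : Fin n) :
    (List.ofFn L).count (L i) =
      ((List.ofFn L).take (i + 1)).count (L i) + #{j | L j = L i ∧ i < j} := by
  rw [count_ofFn, count_take_ofFn,
    ← Finset.card_filter_add_card_filter_not (fun j : Fin n => j.val < i + 1)]
  simp only [Finset.filter_filter, not_lt, Nat.succ_le_iff, Fin.val_fin_lt]

-- Parikh vectors are finitely supported, so `∑ᶠ` has no junk value even if `Set.Iio c` is infinite.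
theorem card_filter_lt_eq_finsum [LinearOrder α] (L : Fin n → α) (c : α) :
    #{j | L j < c} = ∑ᶠ d ∈ Set.Iio c, (List.ofFn L).count d := by
  have hsupp : Set.Iio c ∩ Function.support (fun d => (List.ofFn L).count d) =
      (((Finset.univ.image L).filter (· < c) : Finset α) : Set α) ∩
        Function.support fun d => (List.ofFn L).count d := by
    ext d
    have hmem : (List.ofFn L).count d ≠ 0 ↔ d ∈ Finset.univ.image L := by
      simp [← Nat.pos_iff_ne_zero, List.count_pos_iff]
    simp only [Set.mem_inter_iff, Set.mem_Iio, Function.mem_support, Finset.mem_coe,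
      Finset.mem_filter, hmem]
    tauto
  rw [finsum_mem_eq_sum_of_inter_support_eq _ hsupp,
    Finset.card_eq_sum_card_fiberwise (f := L) (t := (Finset.univ.image L).filter (· < c))
      fun j hj => by simpa using hj]
  refine Finset.sum_congr rfl fun d hd => ?_
  have hdc : d < c := (Finset.mem_filter.mp hd).2
  rw [count_ofFn, Finset.filter_filter]
  exact congrArg _ (Finset.filter_congr fun j _ => ⟨And.right, fun h => ⟨h ▸ hdc, h⟩⟩)

theorem card_filter_apply_lt {e : Fin n → Fin n} (he : Function.Injective e) (i : Fin n) :
    #{j | e j < e i} = e i := by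
  have hbij : Function.Bijective e := Finite.injective_iff_bijective.mp he
  rw [Finset.card_bijective (t := Finset.Iio (e i)) e hbij fun _ => by simp, Fin.card_Iio]

end Counting

namespace IsBWTMatrix

variable {σ : ℕ → α → α → Prop} {w : List α} {n : ℕ} {rows : Fin n → List α} {L : Fin n → α}
  {LF : Fin n → Fin n} {i j : Fin n}

theorem length_row (M : IsBWTMatrix σ w rows L LF) (i : Fin n) : (rows i).length = n := by
  choose g hg using M.exists_row_eq
  have g_injective : Function.Injective g := fun j k hjk =>
    Fin.ext <| M.primitive j k (by grind [M.length_eq]) (by grind [M.length_eq]) <| by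
      rw [← hg, ← hg, hjk]
  obtain ⟨j, rfl⟩ := Finite.surjective_of_injective g_injective i
  rw [hg, List.length_rotate, M.length_eq]

theorem row_eq (M : IsBWTMatrix σ w rows L LF) (i : Fin n) :
    rows i = (rows i).dropLast ++ [L i] :=
  (List.dropLast_append_getLast? _ (M.getLast?_row i)).symm

theorem row_LF_eq_cons (M : IsBWTMatrix σ w rows L LF) (i : Fin n) :
    rows (LF i) = L i :: (rows i).dropLast := by
  have h := List.rotate_append_length_eq (rows i).dropLast [L i]
  rwa [← M.row_eq, List.length_dropLast, ← M.row_LF] at h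

variable [∀ d, Std.Asymm (σ d)]

theorem lt_iff (M : IsBWTMatrix σ w rows L LF) : i < j ↔ KLt σ 0 (rows i) (rows j) := by
  refine ⟨M.sorted i j, fun h => ?_⟩
  rcases lt_trichotomy i j with hij | rfl | hji
  · exact hij
  · exact absurd h (KLt.irrefl 0 _)
  · exact absurd h (M.sorted j i hji).asymm

theorem LF_injective (M : IsBWTMatrix σ w rows L LF) : Function.Injective LF := by
  intro i j hij
  have h : L i :: (rows i).dropLast = L j :: (rows j).dropLast := by
    rw [← M.row_LF_eq_cons, ← M.row_LF_eq_cons, hij]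
  obtain ⟨hL, hdrop⟩ := List.cons.inj h
  have hrow : rows i = rows j := by rw [M.row_eq i, M.row_eq j, hL, hdrop]
  by_contra hne
  rcases lt_or_gt_of_ne hne with h | h
  all_goals exact KLt.irrefl 0 (rows j) (by simpa only [M.lt_iff, hrow] using h)

theorem LF_lt_LF_iff (M : IsBWTMatrix σ w rows L LF) :
    LF i < LF j ↔
      σ 0 (L i) (L j) ∨ L i = L j ∧ KLt σ 1 (rows i).dropLast (rows j).dropLast := by
  rw [M.lt_iff, M.row_LF_eq_cons, M.row_LF_eq_cons, KLt]

theorem LF_lt_LF_iff_of_eq (M : IsBWTMatrix σ w rows L LF) (h : L i = L j) :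
    LF i < LF j ↔ KLt σ 1 (rows i).dropLast (rows j).dropLast := by
  rw [M.LF_lt_LF_iff, h]
  simp [Std.Irrefl.irrefl (r := σ 0)]

theorem lt_iff_of_eq (M : IsBWTMatrix σ w rows L LF) (h : L i = L j) :
    i < j ↔ KLt σ 0 (rows i).dropLast (rows j).dropLast := by
  have hlen : (rows i).dropLast.length = (rows j).dropLast.length := by
    simp [M.length_row]
  rw [M.lt_iff, ← KLt.append_right_iff [L i] hlen, ← M.row_eq, h, ← M.row_eq]

theorem LF_eq [LinearOrder α] (M : IsBWTMatrix σ w rows L LF) (h₀ : ∀ a b, σ 0 a b ↔ a < b)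
    (i : Fin n) :
    (LF i : ℕ) = ∑ᶠ d ∈ Set.Iio (L i), (List.ofFn L).count d +
      #{j | L j = L i ∧ LF j < LF i} := by
  have hsplit : Finset.univ.filter (fun j => LF j < LF i) =
      Finset.univ.filter (fun j => L j < L i) ∪
        Finset.univ.filter (fun j => L j = L i ∧ LF j < LF i) := by
    ext j
    simp only [Finset.mem_union, Finset.mem_filter_univ, M.LF_lt_LF_iff, h₀]
    tauto
  rw [← card_filter_apply_lt M.LF_injective, hsplit, Finset.card_union_of_disjoint,
    card_filter_lt_eq_finsum]
  exact Finset.disjoint_filter.mpr fun j _ (hlt : L j < L i) heq => hlt.ne heq.1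

end IsBWTMatrix

/-- The sequence of orders of `K = (Id, π)`. -/
abbrev twoOrders [LT α] (π : α → α → Prop) (d : ℕ) : α → α → Prop :=
  if d % 2 = 0 then (fun a b : α => a < b) else π

section Sufficiency

variable [LinearOrder α]

theorem rankInvertible_twoOrders_lt : RankInvertible (twoOrders fun a b : α => a < b) := by
  have hconst : twoOrders (fun a b : α => a < b) = fun _ a b => a < b :=
    funext fun _ => ite_self _
  rw [hconst]
  refine rankInvertible_iff_exists_isRankInverse.mpr
    ⟨fun P c r => ∑ᶠ d ∈ Set.Iio c, P d + (r - 1), fun w n rows L LF M i => ?_⟩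
  have hLF (j : Fin n) : L j = L i ∧ LF j < LF i ↔ L j = L i ∧ j < i :=
    and_congr_right fun h => by
      rw [M.LF_lt_LF_iff_of_eq h, KLt.succ_iff fun _ _ _ => Iff.rfl, M.lt_iff_of_eq h]
  simp only [M.LF_eq (fun _ _ => Iff.rfl) i, hLF, rank_eq_card_filter_lt_add_one,
    Nat.add_sub_cancel]

theorem rankInvertible_twoOrders_gt : RankInvertible (twoOrders fun a b : α => b < a) := by
  have (d : ℕ) : Std.Asymm (twoOrders (fun a b : α => b < a) d) := by
    unfold twoOrders; split_ifs <;> infer_instance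
  have hswap (d : ℕ) (a b : α) : twoOrders (fun a b : α => b < a) (d + 1) a b ↔
      twoOrders (fun a b : α => b < a) d b a := by
    rcases Nat.mod_two_eq_zero_or_one d with h | h <;> simp [twoOrders, Nat.add_mod, h]
  refine rankInvertible_iff_exists_isRankInverse.mpr
    ⟨fun P c r => ∑ᶠ d ∈ Set.Iio c, P d + (P c - r), fun w n rows L LF M i => ?_⟩
  have hLF (j : Fin n) : L j = L i ∧ LF j < LF i ↔ L j = L i ∧ i < j :=
    and_congr_right fun h => by
      rw [M.LF_lt_LF_iff_of_eq h, KLt.succ_iff_swap hswap, M.lt_iff_of_eq h.symm]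
  simp only [M.LF_eq (fun _ _ => Iff.rfl) i, hLF, count_ofFn_eq_rank_add,
    Nat.add_sub_cancel_left]

end Sufficiency

section Necessity

theorem IsRankInverse.eq_LF [DecidableEq α] {σ : ℕ → α → α → Prop} {f : (α → ℕ) → α → ℕ → ℕ}
    {w : List α} {n : ℕ} {rows : Fin n → List α} {L : Fin n → α} {LF : Fin n → Fin n}
    (hf : IsRankInverse σ f) (M : IsBWTMatrix σ w rows L LF) {P : α → ℕ}
    (hP : ∀ x, (List.ofFn L).count x = P x) {i : Fin n} {x : α} (hx : L i = x) {r : ℕ}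
    (hr : ((List.ofFn L).take (i + 1)).count x = r) :
    f P x r = LF i := by
  rw [hf M i, hx, hr, funext hP]

variable [LinearOrder α] {π : α → α → Prop} [Std.Asymm π] [Std.Trichotomous π]
  {f : (α → ℕ) → α → ℕ → ℕ} {a b c : α}

theorem IsRankInverse.rel_iff_aabc (hf : IsRankInverse (twoOrders π) f) (hab : a < b)
    (hbc : b < c) : π a b ↔ f (fun x => [a, a, b, c].count x) a 1 = 0 := by
  have hac := hab.trans hbc
  have hw : Primitive [a, a, b, c] :=
    primitive_of_count_eq_one (c := c) (by simp [hac.ne, hbc.ne])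
  rcases trichotomous_of π a b with h | h | h
  · have M : IsBWTMatrix (twoOrders π) [a, a, b, c]
        ![[a, a, b, c], [a, b, c, a], [b, c, a, a], [c, a, a, b]]
        ![c, a, a, b] ![3, 0, 1, 2] := by
      refine ⟨rfl, hw, ?_, ?_, ?_, ?_⟩ <;>
        simp [Fin.forall_fin_succ, Fin.exists_fin_succ, KLt, twoOrders, hab, hbc, hac, h]
    have hM : f (fun x => [a, a, b, c].count x) a 1 = 0 :=
      hf.eq_LF M (i := 1) (fun x => by simp [List.count_cons, add_comm, add_left_comm]) rfl
        (by simp [hac.ne'])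
    exact iff_of_true h hM
  · exact absurd h hab.ne
  · have M : IsBWTMatrix (twoOrders π) [a, a, b, c]
        ![[a, b, c, a], [a, a, b, c], [b, c, a, a], [c, a, a, b]]
        ![a, c, a, b] ![1, 3, 0, 2] := by
      refine ⟨rfl, hw, ?_, ?_, ?_, ?_⟩ <;>
        simp [Fin.forall_fin_succ, Fin.exists_fin_succ, KLt, twoOrders, hab, hbc, hac, h]
    have hM : f (fun x => [a, a, b, c].count x) a 1 = 1 :=
      hf.eq_LF M (i := 0) (fun x => by simp [List.count_cons, add_comm, add_left_comm]) rfl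
        (by simp)
    exact iff_of_false (asymm_of π h) (by omega)

theorem IsRankInverse.rel_iff_aacb (hf : IsRankInverse (twoOrders π) f) (hab : a < b)
    (hbc : b < c) : π a c ↔ f (fun x => [a, a, b, c].count x) a 1 = 0 := by
  have hac := hab.trans hbc
  have hw : Primitive [a, a, c, b] :=
    primitive_of_count_eq_one (c := c) (by simp [hac.ne, hbc.ne])
  rcases trichotomous_of π a c with h | h | h
  · have M : IsBWTMatrix (twoOrders π) [a, a, c, b]
        ![[a, a, c, b], [a, c, b, a], [b, a, a, c], [c, b, a, a]]
        ![b, a, c, a] ![2, 0, 3, 1] := by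
      refine ⟨rfl, hw, ?_, ?_, ?_, ?_⟩ <;>
        simp [Fin.forall_fin_succ, Fin.exists_fin_succ, KLt, twoOrders, hab, hbc, hac, h]
    have hM : f (fun x => [a, a, b, c].count x) a 1 = 0 :=
      hf.eq_LF M (i := 1) (fun x => by simp [List.count_cons, add_comm, add_left_comm]) rfl
        (by simp [hab.ne'])
    exact iff_of_true h hM
  · exact absurd h hac.ne
  · have M : IsBWTMatrix (twoOrders π) [a, a, c, b]
        ![[a, c, b, a], [a, a, c, b], [b, a, a, c], [c, b, a, a]]
        ![a, b, c, a] ![1, 2, 3, 0] := by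
      refine ⟨rfl, hw, ?_, ?_, ?_, ?_⟩ <;>
        simp [Fin.forall_fin_succ, Fin.exists_fin_succ, KLt, twoOrders, hab, hbc, hac, h]
    have hM : f (fun x => [a, a, b, c].count x) a 1 = 1 :=
      hf.eq_LF M (i := 0) (fun x => by simp [List.count_cons, add_comm, add_left_comm]) rfl
        (by simp)
    exact iff_of_false (asymm_of π h) (by omega)

theorem IsRankInverse.rel_iff_abac (hf : IsRankInverse (twoOrders π) f) (hab : a < b)
    (hbc : b < c) : π b c ↔ f (fun x => [a, a, b, c].count x) a 1 = 0 := by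
  have hac := hab.trans hbc
  have hw : Primitive [a, b, a, c] :=
    primitive_of_count_eq_one (c := c) (by simp [hac.ne, hbc.ne])
  rcases trichotomous_of π b c with h | h | h
  · have M : IsBWTMatrix (twoOrders π) [a, b, a, c]
        ![[a, b, a, c], [a, c, a, b], [b, a, c, a], [c, a, b, a]]
        ![c, b, a, a] ![3, 2, 0, 1] := by
      refine ⟨rfl, hw, ?_, ?_, ?_, ?_⟩ <;>
        simp [Fin.forall_fin_succ, Fin.exists_fin_succ, KLt, twoOrders, hab, hbc, hac, h]
    have hM : f (fun x => [a, a, b, c].count x) a 1 = 0 :=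
      hf.eq_LF M (i := 2) (fun x => by simp [List.count_cons, add_comm, add_left_comm]) rfl
        (by simp [hac.ne', hab.ne'])
    exact iff_of_true h hM
  · exact absurd h hbc.ne
  · have M : IsBWTMatrix (twoOrders π) [a, b, a, c]
        ![[a, c, a, b], [a, b, a, c], [b, a, c, a], [c, a, b, a]]
        ![b, c, a, a] ![2, 3, 1, 0] := by
      refine ⟨rfl, hw, ?_, ?_, ?_, ?_⟩ <;>
        simp [Fin.forall_fin_succ, Fin.exists_fin_succ, KLt, twoOrders, hab, hbc, hac, h]
    have hM : f (fun x => [a, a, b, c].count x) a 1 = 1 :=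
      hf.eq_LF M (i := 2) (fun x => by simp [List.count_cons, add_comm, add_left_comm]) rfl
        (by simp [hab.ne', hac.ne'])
    exact iff_of_false (asymm_of π h) (by omega)

end Necessity

theorem rel_eq_of_imp {r s : α → α → Prop} [Std.Trichotomous r] [Std.Asymm s]
    (h : ∀ a b, r a b → s a b) : r = s := by
  funext a b
  refine propext ⟨h a b, fun hs => ?_⟩
  rcases trichotomous_of r a b with hr | rfl | hr
  · exact hr
  · exact absurd hs (irrefl_of s a)
  · exact absurd hs (asymm_of s (h b a hr))

theorem eq_lt_or_eq_gt_of_forall_lt_lt [LinearOrder α] {π : α → α → Prop}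
    [Std.Trichotomous π] [Std.Asymm π]
    (h : ∀ a b c, a < b → b < c → (π a b ↔ π a c) ∧ (π b c ↔ π a c)) :
    (π = fun a b : α => a < b) ∨ (π = fun a b : α => b < a) := by
  have extend {a b m M : α} (hma : m ≤ a) (hab : a < b) (hbM : b ≤ M) : π a b ↔ π m M := by
    have left : π a b ↔ π m b := by
      rcases hma.eq_or_lt with rfl | hma
      exacts [Iff.rfl, (h m a b hma hab).2]
    have right : π m b ↔ π m M := by
      rcases hbM.eq_or_lt with rfl | hbM
      exacts [Iff.rfl, (h m b M (hma.trans_lt hab) hbM).1]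
    exact left.trans right
  have same {a b c d : α} (hab : a < b) (hcd : c < d) : π a b ↔ π c d :=
    (extend (min_le_left a c) hab (le_max_left b d)).trans
      (extend (min_le_right a c) hcd (le_max_right b d)).symm
  by_cases hex : ∃ a b, a < b ∧ π a b
  · obtain ⟨a, b, hab, hπ⟩ := hex
    exact .inl (rel_eq_of_imp fun c d hcd => (same hab hcd).mp hπ).symm
  · push Not at hex
    refine .inr (rel_eq_of_imp fun c d hdc => ?_).symm
    rcases trichotomous_of π c d with hcd | rfl | hcd
    · exact hcd
    · exact absurd hdc (lt_irrefl c)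
    · exact absurd hcd (hex d c hdc)

theorem bwtK_two_orders_rank_invertible_iff_general [LinearOrder α]
    (π : α → α → Prop) (hπ : IsStrictTotalOrder α π) :
    RankInvertible (fun d => if d % 2 = 0 then (fun a b : α => a < b) else π) ↔
      ((π = fun a b : α => a < b) ∨ (π = fun a b : α => b < a)) := by
  constructor
  · intro hinv
    obtain ⟨f, hf⟩ := rankInvertible_iff_exists_isRankInverse.mp hinv
    refine eq_lt_or_eq_gt_of_forall_lt_lt fun a b c hab hbc => ?_
    have h_ac := hf.rel_iff_aacb hab hbc
    exact ⟨(hf.rel_iff_aabc hab hbc).trans h_ac.symm, (hf.rel_iff_abac hab hbc).trans h_ac.symm⟩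
  · rintro (rfl | rfl)
    · exact rankInvertible_twoOrders_lt
    · exact rankInvertible_twoOrders_gt

/-- for a finite alphabet with at least two symbols and
`K = (Id, π)` with `π` a linear (strict total) order, `BWT_K` is
rank-invertible iff `π` is the standard order or its reverse. -/
theorem bwtK_two_orders_rank_invertible_iff [LinearOrder α] [Fintype α]
    (hcard : 2 ≤ Fintype.card α)
    (π : α → α → Prop) (hπ : IsStrictTotalOrder α π) :
    RankInvertible (fun d => if d % 2 = 0 then (fun a b : α => a < b) else π) ↔
      ((π = fun a b : α => a < b) ∨ (π = fun a b : α => b < a)) :=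
  bwtK_two_orders_rank_invertible_iff_general π hπ

end Paper
end

section
/- Let Σ be a finite alphabet with |Σ| ≥ 3 and let K = (Id, π_1, π_2, …, π_{k−1}) with k ≥ 2 be a tuple of linear orders on Σ. If π_1 ≠ Id and π_1 ≠ Rev, then BWT_K is not rank-invertible. -/
namespace Paper

variable {α : Type*}

/-!
For letters `a < b < c` the words `aabc` and `abac` have the same Parikh vector. In each of their
sorted rotation matrices, the first row ending in `a` is the word rotated left by one, so `LF`
sends it to the row of the word itself. Only two rows start with `a`, and the second letter decides
between them: `aabc` is row `0` or `1` according to how `π 1` compares `a` with `b`, and `abac` is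
row `0` or `1` according to how `π 1` compares `b` with `c`. Rank-invertibility would force the two
indices to agree. An order other than the standard one and its reverse makes the identity neither
monotone nor antitone, hence has a peak or a valley `b` between some `a < c`, and there the two
indices differ.
-/

/-- The sorted rotation matrix of the word `w`, encoded by the starting positions of its rows (as
in a suffix array): `s` enumerates the rotations of `w` in increasing `KLt` order. -/
def IsRotationArray {n : ℕ} (σ : ℕ → α → α → Prop) (w : Fin n → α) (s : Equiv.Perm (Fin n)) :
    Prop :=
  ∀ i j, i < j → KLt σ 0 ((List.ofFn w).rotate (s i)) ((List.ofFn w).rotate (s j))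

theorem rotate_ofFn (w : Fin n → α) (k : Fin n) :
    (List.ofFn w).rotate k = List.ofFn fun j => w (j + k) := by
  refine List.ext_getElem (by simp) fun j hj hj' => ?_
  simp [List.getElem_rotate, Fin.add_def]

section RotationArray

variable {n : ℕ} [NeZero n]

/-- The last column of the rotation matrix with starting positions `s`. The row starting at `s i`
ends just before it, cyclically; the subtraction in `Fin n` wraps around. -/
def lastColumn (w : Fin n → α) (s : Equiv.Perm (Fin n)) (i : Fin n) : α :=
  w (s i - 1)

/-- The map `LF` on the row indices for the starting positions `s`: rotating a row right by one
moves its starting position back by one, cyclically. -/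
def lfMap (s : Equiv.Perm (Fin n)) (i : Fin n) : Fin n :=
  s.symm (s i - 1)

theorem primitive_ofFn_of_unique {w : Fin n → α} {p : Fin n} (hp : ∀ q, w q = w p → q = p) :
    Primitive (List.ofFn w) := by
  intro i j hi hj h
  rw [List.length_ofFn] at hi hj
  lift i to Fin n using hi
  lift j to Fin n using hj
  rw [rotate_ofFn, rotate_ofFn, List.ofFn_inj] at h
  have hpos : p - i + j = p := hp _ (by simpa using (congrFun h (p - i)).symm)
  rw [sub_add_eq_add_sub, sub_eq_iff_eq_add, add_right_inj] at hpos
  rw [hpos]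

theorem getLast?_rotate_ofFn (w : Fin n → α) (k : Fin n) :
    ((List.ofFn w).rotate k).getLast? = some (w (k - 1)) := by
  obtain ⟨m, rfl⟩ := Nat.exists_eq_succ_of_ne_zero (NeZero.ne n)
  have last_eq_neg_one : Fin.last m = -1 := Fin.ext Fin.coe_neg_one.symm
  rw [rotate_ofFn, List.getLast?_eq_getLast_of_ne_nil (by simp), List.getLast_ofFn_succ,
    last_eq_neg_one, neg_add_eq_sub]

theorem rotate_ofFn_sub_one (w : Fin n → α) (k : Fin n) :
    (List.ofFn w).rotate ↑(k - 1) = ((List.ofFn w).rotate k).rotate (n - 1) := by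
  obtain ⟨m, rfl⟩ := Nat.exists_eq_succ_of_ne_zero (NeZero.ne n)
  rw [List.rotate_rotate, sub_eq_add_neg, Fin.val_add, Fin.coe_neg_one, Nat.succ_sub_one,
    ← List.rotate_mod _ (k + m), List.length_ofFn]

theorem ofFn_lastColumn_perm (w : Fin n → α) (s : Equiv.Perm (Fin n)) :
    (List.ofFn (lastColumn w s)).Perm (List.ofFn w) :=
  Equiv.Perm.ofFn_comp_perm (s.trans (Equiv.subRight 1)) w

theorem RankInvertible.lfMap_eq [LinearOrder α] {σ : ℕ → α → α → Prop} (hσ : RankInvertible σ)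
    {w w' : Fin n → α} {s s' : Equiv.Perm (Fin n)}
    (hw : Primitive (List.ofFn w)) (hs : IsRotationArray σ w s)
    (hw' : Primitive (List.ofFn w')) (hs' : IsRotationArray σ w' s')
    (hperm : (List.ofFn w).Perm (List.ofFn w')) {i i' : Fin n}
    (hsymb : lastColumn w s i = lastColumn w' s' i')
    (hrank : ((List.ofFn (lastColumn w s)).take (i + 1)).count (lastColumn w s i) =
      ((List.ofFn (lastColumn w' s')).take (i' + 1)).count (lastColumn w' s' i')) :
    lfMap s i = lfMap s' i' := by
  obtain ⟨f, hf⟩ := hσ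
  have lfMap_eq_apply : ∀ {w : Fin n → α} {s},
      Primitive (List.ofFn w) → IsRotationArray σ w s → ∀ i,
      (lfMap s i : ℕ) = f (fun c => (List.ofFn w).count c) (lastColumn w s i)
        (((List.ofFn (lastColumn w s)).take (i + 1)).count (lastColumn w s i)) := by
    intro w s hw hs i
    simp only [← (ofFn_lastColumn_perm w s).count_eq]
    exact hf n _ List.length_ofFn hw (fun j => (List.ofFn w).rotate (s j))
      (lastColumn w s) (lfMap s) (fun j => ⟨s.symm j, by rw [s.apply_symm_apply]⟩) hs
      (fun j => getLast?_rotate_ofFn w (s j))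
      (fun j => by simp [lfMap, rotate_ofFn_sub_one]) i
  apply Fin.ext
  rw [lfMap_eq_apply hw hs, lfMap_eq_apply hw' hs', hrank, hsymb]
  simp only [hperm.count_eq]

end RotationArray

section FourLetterWords

variable {σ : ℕ → α → α → Prop} {a b c : α}

theorem aabc_perm_abac (a b c : α) : (List.ofFn ![a, a, b, c]).Perm (List.ofFn ![a, b, a, c]) := by
  simpa using List.Perm.swap b a [c]

theorem primitive_aabc (hac : a ≠ c) (hbc : b ≠ c) : Primitive (List.ofFn ![a, a, b, c]) := by
  refine primitive_ofFn_of_unique (p := 3) ?_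
  simp [Fin.forall_fin_succ, hac, hbc]

theorem primitive_abac (hac : a ≠ c) (hbc : b ≠ c) : Primitive (List.ofFn ![a, b, a, c]) := by
  refine primitive_ofFn_of_unique (p := 3) ?_
  simp [Fin.forall_fin_succ, hac, hbc]

theorem isRotationArray_aabc_of_rel (hab : σ 0 a b) (hac : σ 0 a c) (hbc : σ 0 b c)
    (h1 : σ 1 a b) : IsRotationArray σ ![a, a, b, c] 1 := by
  simp [IsRotationArray, Fin.forall_fin_succ, KLt, List.rotate, hab, hac, hbc, h1]

theorem isRotationArray_aabc_of_rel_swap (hab : σ 0 a b) (hac : σ 0 a c) (hbc : σ 0 b c)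
    (h1 : σ 1 b a) : IsRotationArray σ ![a, a, b, c] (Equiv.swap 0 1) := by
  simp [IsRotationArray, Fin.forall_fin_succ, KLt, List.rotate, Equiv.swap_apply_def,
    hab, hac, hbc, h1]

theorem isRotationArray_abac_of_rel (hab : σ 0 a b) (hac : σ 0 a c) (hbc : σ 0 b c)
    (h1 : σ 1 b c) : IsRotationArray σ ![a, b, a, c] (Equiv.swap 1 2) := by
  simp [IsRotationArray, Fin.forall_fin_succ, KLt, List.rotate, Equiv.swap_apply_def,
    hab, hac, hbc, h1]

theorem isRotationArray_abac_of_rel_swap (hab : σ 0 a b) (hac : σ 0 a c) (hbc : σ 0 b c)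
    (h1 : σ 1 c b) : IsRotationArray σ ![a, b, a, c] (Equiv.swap 1 2 * Equiv.swap 0 1) := by
  simp [IsRotationArray, Fin.forall_fin_succ, KLt, List.rotate, Equiv.swap_apply_def,
    hab, hac, hbc, h1]

theorem not_rankInvertible_of_peak [LinearOrder α] (h0 : ∀ ⦃x y⦄, x < y → σ 0 x y)
    (hab : a < b) (hbc : b < c) (h1ab : σ 1 a b) (h1cb : σ 1 c b) : ¬ RankInvertible σ := by
  intro hσ
  have hac : a < c := hab.trans hbc
  have lfMap_eq := hσ.lfMap_eq (i := 1) (i' := 2)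
    (primitive_aabc hac.ne hbc.ne)
    (isRotationArray_aabc_of_rel (h0 hab) (h0 hac) (h0 hbc) h1ab)
    (primitive_abac hac.ne hbc.ne)
    (isRotationArray_abac_of_rel_swap (h0 hab) (h0 hac) (h0 hbc) h1cb)
    (aabc_perm_abac a b c)
    (by simp [lastColumn, Equiv.swap_apply_def])
    (by simp [lastColumn, Equiv.swap_apply_def, hab.ne, hab.ne', hac.ne', hbc.ne])
  have lfMap_aabc : lfMap (1 : Equiv.Perm (Fin 4)) 1 = 0 := by decide
  have lfMap_abac : lfMap (Equiv.swap 1 2 * Equiv.swap 0 1 : Equiv.Perm (Fin 4)) 2 = 1 := by decide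
  rw [lfMap_aabc, lfMap_abac] at lfMap_eq
  exact absurd lfMap_eq (by decide)

theorem not_rankInvertible_of_valley [LinearOrder α] (h0 : ∀ ⦃x y⦄, x < y → σ 0 x y)
    (hab : a < b) (hbc : b < c) (h1ba : σ 1 b a) (h1bc : σ 1 b c) : ¬ RankInvertible σ := by
  intro hσ
  have hac : a < c := hab.trans hbc
  have lfMap_eq := hσ.lfMap_eq (i := 0) (i' := 2)
    (primitive_aabc hac.ne hbc.ne)
    (isRotationArray_aabc_of_rel_swap (h0 hab) (h0 hac) (h0 hbc) h1ba)
    (primitive_abac hac.ne hbc.ne)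
    (isRotationArray_abac_of_rel (h0 hab) (h0 hac) (h0 hbc) h1bc)
    (aabc_perm_abac a b c)
    (by simp [lastColumn])
    (by simp [lastColumn, Equiv.swap_apply_def, hab.ne, hab.ne', hac.ne'])
  have lfMap_aabc : lfMap (Equiv.swap 0 1 : Equiv.Perm (Fin 4)) 0 = 1 := by decide
  have lfMap_abac : lfMap (Equiv.swap 1 2 : Equiv.Perm (Fin 4)) 2 = 0 := by decide
  rw [lfMap_aabc, lfMap_abac] at lfMap_eq
  exact absurd lfMap_eq (by decide)

end FourLetterWords

theorem exists_peak_or_valley [LinearOrder α] {R : α → α → Prop} [IsStrictTotalOrder α R]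
    (hlt : R ≠ fun a b => a < b) (hgt : R ≠ fun a b => b < a) :
    ∃ a b c, a < b ∧ b < c ∧ (R a b ∧ R c b ∨ R b a ∧ R b c) := by
  classical
  -- The source of `id` carries the given order, its target the order `R`.
  refine (@not_monotone_not_antitone_iff_exists_lt_lt α α _ (linearOrderOfSTO R) id).1
    ⟨fun h => hlt ?_, fun h => hgt ?_⟩
  · ext a b
    exact (RelEmbedding.ofMonotone (r := fun a b => a < b) (s := R) id
      fun a b hab => (h hab.le).resolve_left hab.ne).map_rel_iff
  · ext a b
    exact (RelEmbedding.ofMonotone (r := fun a b => b < a) (s := R) id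
      fun a b hba => (h hba.le).resolve_left hba.ne').map_rel_iff

theorem bwtK_second_order_not_id_rev_not_rank_invertible_general [LinearOrder α]
    {σ : ℕ → α → α → Prop} [IsStrictTotalOrder α (σ 1)] (h0 : ∀ ⦃a b⦄, a < b → σ 0 a b)
    (h1lt : σ 1 ≠ fun a b => a < b) (h1gt : σ 1 ≠ fun a b => b < a) : ¬ RankInvertible σ := by
  obtain ⟨a, b, c, hab, hbc, ⟨h1ab, h1cb⟩ | ⟨h1ba, h1bc⟩⟩ := exists_peak_or_valley h1lt h1gt
  · exact not_rankInvertible_of_peak h0 hab hbc h1ab h1cb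
  · exact not_rankInvertible_of_valley h0 hab hbc h1ba h1bc

/-- for a finite alphabet with at least three symbols and
`K = (Id, π 1, …, π (k-1))` with `k ≥ 2`, if `π 1` is neither the standard
order nor its reverse then `BWT_K` is not rank-invertible. -/
theorem bwtK_second_order_not_id_rev_not_rank_invertible [LinearOrder α] [Fintype α]
    (hcard : 3 ≤ Fintype.card α)
    (k : ℕ) (hk : 2 ≤ k) (π : Fin k → α → α → Prop)
    (horder : ∀ t, IsStrictTotalOrder α (π t))
    (h0 : π ⟨0, by omega⟩ = fun a b : α => a < b)
    (h1lt : π ⟨1, by omega⟩ ≠ fun a b : α => a < b)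
    (h1gt : π ⟨1, by omega⟩ ≠ fun a b : α => b < a) :
    ¬ RankInvertible (fun d => π ⟨d % k, Nat.mod_lt d (by omega)⟩) := by
  have one_mod : 1 % k = 1 := Nat.mod_eq_of_lt hk
  have := horder ⟨1 % k, Nat.mod_lt 1 (by omega)⟩
  exact bwtK_second_order_not_id_rev_not_rank_invertible_general
    (σ := fun d => π ⟨d % k, Nat.mod_lt d (by omega)⟩) (by simp [h0])
    (by simpa only [one_mod] using h1lt) (by simpa only [one_mod] using h1gt)

end Paper
end
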